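/- arXiv:1208.1225 — 2 statements merged into one kernel-verified Lean document; each statement's English description precedes it below -/
import Mathlib

section
/- Consider the Shannon code of block length n for an irreducible aperiodic first-order Markov source on {1,…,r}. If ρ(A_m) < 1 for every positive integer m, then the average redundancy satisfies R_n = 1/2 + o(1), i.e., lim_{n→∞} R_n = 1/2. -/
/-!
The redundancy is the expectation of `t = ϱ(−log μ(X))`, a representative of `log μ(X)` modulo `1`
in `[0, 1)`, so it suffices to know that `log μ(X)` becomes equidistributed modulo `1`.

*Fourier coefficients.* The weight `φ_m(q) = q · exp(−2πi m log q)` is multiplicative on the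
nonnegative reals, so `∑ₓ φ_m(μ(x))` is the sum over paths `c ⬝ A_mⁿ 1` with `c = φ_m ∘ pinit`
(`sum_path_eq`). Gelfand's formula and `ρ(A_m) < 1` give `A_mⁿ → 0`
(`tendsto_pow_zero_of_specRad_lt_one`), so every Fourier coefficient with `m ≥ 1` tends to `0`
(`tendsto_sum_phase`).

*From Fourier coefficients to `ϱ`.* Since `ϱ` jumps at the integers, it is compared with difference
quotients of the continuous function `S(v) = ∑_{m ≥ 1} cos(2πmv)/m²`, which on `[0, 1]` equals
`π² (v² − v + 1/6)`. As a periodic function, `S` lies below each of its quadratic branches, whence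
`S(t + h) − S(t) ≤ π² (h (2t − 1) + h²)` for `t ∈ [0, 1]` and `|h| ≤ 1` (`cosSeries_add_sub_le`).
For `h > 0`, used with both `h` and `−h`, this bounds `2t − 1` from below and above by difference
quotients of `S` up to an error `h`. The expectations of `S(t + h)` tend to `0` by dominated
convergence (`tendsto_sum_cosSeries`), so `|2 R_n − 1|` is eventually at most `2h` for every `h > 0`.
-/

/-!
STATEMENT 2: For an irreducible aperiodic Markov source, if ρ(A_m) < 1 for
every positive integer m, then R_n → 1/2.
The alphabet is `Fin (r+2)`; `p j k = p(j|k)`; block length is `n+1`.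
-/

/-- ϱ(u) = ⌈u⌉ − u -/
noncomputable def vrho (u : ℝ) : ℝ := (⌈u⌉ : ℝ) - u

noncomputable def markovProb {r n : ℕ} (pinit : Fin r → ℝ) (p : Fin r → Fin r → ℝ)
    (x : Fin (n + 1) → Fin r) : ℝ :=
  pinit (x 0) * ∏ t : Fin n, p (x t.succ) (x t.castSucc)

/-- Average unnormalized redundancy of the Shannon code of block length `n+1`. -/
noncomputable def shannonRed (r n : ℕ) (pinit : Fin r → ℝ) (p : Fin r → Fin r → ℝ) : ℝ :=
  ∑ x : Fin (n + 1) → Fin r,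
    markovProb pinit p x * vrho (-Real.logb 2 (markovProb pinit p x))

/-- The transition matrix `P` with entry `(j,k)` equal to `p(j|k)`. -/
def Pmat {r : ℕ} (p : Fin r → Fin r → ℝ) : Matrix (Fin r) (Fin r) ℝ :=
  Matrix.of fun j k => p j k

/-- The matrix A_m with (j,k) entry p(k|j)·exp(−2πi·m·log₂ p(k|j)) when
p(k|j) > 0 and 0 otherwise. -/
noncomputable def Amat {r : ℕ} (p : Fin r → Fin r → ℝ) (m : ℤ) :
    Matrix (Fin r) (Fin r) ℂ :=
  Matrix.of fun j k =>
    if 0 < p k j then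
      (p k j : ℂ) *
        Complex.exp (-(2 * (Real.pi : ℂ) * Complex.I * (m : ℂ) *
          ((Real.logb 2 (p k j) : ℝ) : ℂ)))
    else 0

/-- Spectral radius: supremum of the moduli of the eigenvalues. -/
noncomputable def specRad {r : ℕ} (A : Matrix (Fin r) (Fin r) ℂ) : ℝ :=
  sSup {x : ℝ | ∃ lam : ℂ,
    (∃ v : Fin r → ℂ, v ≠ 0 ∧ A.mulVec v = lam • v) ∧ x = ‖lam‖}

open Filter Topology

/-! ### Powers of a matrix of spectral radius less than one -/

section MatrixPowers

attribute [local instance] Matrix.linftyOpNormedRing Matrix.linftyOpNormedAlgebra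

/-- Applying powers of a matrix of spectral radius `< 1` to a fixed vector gives `0` in the limit.
The proof uses the `ℓ^∞` operator norm on matrices. -/
lemma tendsto_pow_zero_of_specRad_lt_one {r : ℕ} (A : Matrix (Fin (r + 2)) (Fin (r + 2)) ℂ)
    (hA : specRad A < 1) (w : Fin (r + 2) → ℂ) :
    Tendsto (fun n : ℕ => (A ^ n).mulVec w) atTop (𝓝 0) := by
  have hspec : ∀ k ∈ spectrum ℂ A, ‖k‖ < 1 := by
    intro k hk
    refine lt_of_le_of_lt ?_ hA
    rw [specRad]
    refine le_csSup ?_ ⟨k, ?_, rfl⟩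
    · -- the eigenvalues lie in the spectrum, which is bounded by the operator norm
      refine ⟨‖A‖ * ‖(1 : Matrix (Fin (r + 2)) (Fin (r + 2)) ℂ)‖, ?_⟩
      rintro x ⟨lam, ⟨v, hv, hAv⟩, rfl⟩
      have : lam ∈ spectrum ℂ A := by
        rw [← Matrix.spectrum_toLin', ← Module.End.hasEigenvalue_iff_mem_spectrum]
        refine Module.End.hasEigenvalue_of_hasEigenvector (x := v) ⟨?_, hv⟩
        rw [Module.End.mem_eigenspace_iff]
        simpa using hAv
      exact spectrum.norm_le_norm_mul_of_mem this
    · rw [← Matrix.spectrum_toLin', ← Module.End.hasEigenvalue_iff_mem_spectrum] at hk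
      obtain ⟨v, hv⟩ := hk.exists_hasEigenvector
      refine ⟨v, hv.2, ?_⟩
      simpa using hv.apply_eq_smul
  have : CompleteSpace (Matrix (Fin (r + 2)) (Fin (r + 2)) ℂ) :=
    FiniteDimensional.complete ℂ _
  have hrad : spectralRadius ℂ A < 1 := by
    have := spectrum.spectralRadius_lt_of_forall_lt A (r := 1) (fun k hk => by
      have := hspec k hk
      exact_mod_cast this)
    simpa using this
  obtain ⟨c, hc1, hc2⟩ := ENNReal.lt_iff_exists_nnreal_btwn.1 hrad
  have hc : (c : NNReal) < 1 := by exact_mod_cast hc2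
  have hev : ∀ᶠ n : ℕ in atTop, ‖A ^ n‖ ≤ (c : ℝ) ^ n := by
    filter_upwards [(spectrum.pow_nnnorm_pow_one_div_tendsto_nhds_spectralRadius A).eventually_lt_const
      hc1, eventually_gt_atTop 0] with n hn hn0
    have h1 := ENNReal.rpow_le_rpow hn.le (Nat.cast_nonneg (α := ℝ) n)
    rw [← ENNReal.rpow_mul, one_div, inv_mul_cancel₀ (by positivity), ENNReal.rpow_one,
      ENNReal.rpow_natCast] at h1
    exact_mod_cast h1
  have hpow : Tendsto (fun n : ℕ => A ^ n) atTop (𝓝 0) :=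
    squeeze_zero_norm' hev (tendsto_pow_atTop_nhds_zero_of_lt_one c.2 hc)
  have hcont : Continuous (fun B : Matrix (Fin (r + 2)) (Fin (r + 2)) ℂ => B.mulVec w) := by
    fun_prop
  simpa [Function.comp_def] using (hcont.tendsto 0).comp hpow

end MatrixPowers

/-! ### Sums over paths -/

/-- The total weight of the paths with `n` steps, with initial weights `c` and step weights `A`. -/
lemma sum_path_eq {R : Type*} [CommSemiring R] {r : ℕ} (A : Matrix (Fin r) (Fin r) R)
    (n : ℕ) (c : Fin r → R) :
    ∑ x : Fin (n + 1) → Fin r, c (x 0) * ∏ t : Fin n, A (x t.castSucc) (x t.succ)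
      = ∑ a, c a * (A ^ n).mulVec 1 a := by
  induction n generalizing c with
  | zero =>
    rw [← (Equiv.funUnique (Fin 1) (Fin r)).symm.sum_comp]
    simp
  | succ n ih =>
    rw [← (Fin.consEquiv (fun _ : Fin (n + 2) => Fin r)).sum_comp, Fintype.sum_prod_type]
    refine Finset.sum_congr rfl fun a _ => ?_
    rw [pow_succ', ← Matrix.mulVec_mulVec, Matrix.mulVec, dotProduct, ← ih (A a), Finset.mul_sum]
    refine Finset.sum_congr rfl fun x _ => ?_
    simp [Fin.consEquiv, Fin.prod_univ_succ]

/-- The weight `φ_m(q) = q · exp(−2πi m log₂ q)`; it vanishes at `q = 0`. -/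
noncomputable def phase (m : ℕ) (q : ℝ) : ℂ :=
  (q : ℂ) * Complex.exp (-(2 * (Real.pi : ℂ) * Complex.I * ((m : ℤ) : ℂ) *
          ((Real.logb 2 q : ℝ) : ℂ)))

lemma phase_mul (m : ℕ) (a b : ℝ) : phase m (a * b) = phase m a * phase m b := by
  rcases eq_or_ne a 0 with rfl | ha
  · simp [phase]
  rcases eq_or_ne b 0 with rfl | hb
  · simp [phase]
  simp only [phase, Real.logb_mul ha hb]
  push_cast
  rw [mul_mul_mul_comm, ← Complex.exp_add]
  ring_nf

lemma phase_prod (m : ℕ) {ι : Type*} (s : Finset ι) (f : ι → ℝ) :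
    phase m (∏ i ∈ s, f i) = ∏ i ∈ s, phase m (f i) := by
  classical
  induction s using Finset.induction_on with
  | empty => simp [phase]
  | insert a s ha ih => rw [Finset.prod_insert ha, Finset.prod_insert ha, phase_mul, ih]

lemma Amat_eq_phase {r : ℕ} {p : Fin r → Fin r → ℝ} (hp : ∀ j k, 0 ≤ p j k) (m : ℕ)
    (j k : Fin r) : Amat p (m : ℤ) j k = phase m (p k j) := by
  rcases (hp k j).eq_or_lt with h | h
  · simp [Amat, phase, ← h]
  · simp [Amat, phase, h]

lemma tendsto_sum_phase {r : ℕ} {p : Fin (r + 2) → Fin (r + 2) → ℝ} (pinit : Fin (r + 2) → ℝ)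
    (hp : ∀ j k, 0 ≤ p j k) (m : ℕ) (hm : specRad (Amat p (m : ℤ)) < 1) :
    Tendsto (fun n : ℕ => ∑ x : Fin (n + 1) → Fin (r + 2), phase m (markovProb pinit p x))
      atTop (𝓝 0) := by
  have key : ∀ n : ℕ, ∑ x : Fin (n + 1) → Fin (r + 2), phase m (markovProb pinit p x)
      = ∑ a, phase m (pinit a) * ((Amat p (m : ℤ)) ^ n).mulVec 1 a := by
    intro n
    rw [← sum_path_eq]
    refine Finset.sum_congr rfl fun x _ => ?_
    simp only [markovProb, phase_mul, phase_prod, Amat_eq_phase hp]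
  simp only [key]
  have h := tendsto_pow_zero_of_specRad_lt_one _ hm 1
  rw [tendsto_pi_nhds] at h
  simpa using tendsto_finsetSum Finset.univ fun a _ => (h a).const_mul (phase m (pinit a))

lemma sum_markovProb {r : ℕ} {p : Fin r → Fin r → ℝ} {pinit : Fin r → ℝ}
    (hpsum : ∀ k, ∑ j, p j k = 1) (hinit1 : ∑ j, pinit j = 1) (n : ℕ) :
    ∑ x : Fin (n + 1) → Fin r, markovProb pinit p x = 1 := by
  have h := sum_path_eq (Matrix.of fun j k => p k j) n pinit
  have h1 : ∀ n : ℕ, ((Matrix.of fun j k => p k j) ^ n).mulVec (1 : Fin r → ℝ) = 1 := by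
    intro n
    induction n with
    | zero => simp
    | succ n ih =>
      rw [pow_succ', ← Matrix.mulVec_mulVec, ih]
      ext j
      simp [Matrix.mulVec, dotProduct, hpsum]
  rw [h1] at h
  simpa [markovProb, hinit1] using h

lemma markovProb_nonneg {r n : ℕ} {p : Fin r → Fin r → ℝ} {pinit : Fin r → ℝ}
    (hp : ∀ j k, 0 ≤ p j k) (hi : ∀ j, 0 ≤ pinit j) (x : Fin (n + 1) → Fin r) :
    0 ≤ markovProb pinit p x :=
  mul_nonneg (hi _) (Finset.prod_nonneg fun _ _ => hp _ _)

/-! ### The series `∑ cos(2πmv)/m²` -/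

/-- `S(v) = ∑_{m ≥ 1} cos(2πmv)/m²`; the term `m = 0` is `0` because `1 / 0 = 0`. -/
noncomputable def cosSeries (v : ℝ) : ℝ :=
  ∑' m : ℕ, 1 / (m : ℝ) ^ 2 * Real.cos (2 * Real.pi * m * v)

lemma cosSeries_eq {v : ℝ} (hv : v ∈ Set.Icc (0 : ℝ) 1) :
    cosSeries v = Real.pi ^ 2 * (v ^ 2 - v + 1 / 6) := by
  have h := (hasSum_one_div_nat_pow_mul_cos one_ne_zero hv).tsum_eq
  rw [cosSeries, ← mul_one 2, h]
  simp [Polynomial.bernoulli, Finset.sum_range_succ, bernoulli_one, bernoulli_two]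
  ring

lemma cosSeries_neg (v : ℝ) : cosSeries (-v) = cosSeries v := by
  simp [cosSeries]

lemma cos_add_int (m : ℕ) (v : ℝ) (k : ℤ) :
    Real.cos (2 * Real.pi * m * (v + k)) = Real.cos (2 * Real.pi * m * v) := by
  have : 2 * Real.pi * m * (v + k) = 2 * Real.pi * m * v + ((m * k : ℤ) : ℝ) * (2 * Real.pi) := by
    push_cast; ring
  rw [this, Real.cos_add_int_mul_two_pi]

lemma cosSeries_add_int (v : ℝ) (k : ℤ) : cosSeries (v + k) = cosSeries v := by
  simp only [cosSeries, cos_add_int]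

/-- On `[-1, 2]` the periodic function `S` lies below its quadratic branch on `[0, 1]`. -/
lemma cosSeries_le {w : ℝ} (h1 : -1 ≤ w) (h2 : w ≤ 2) :
    cosSeries w ≤ Real.pi ^ 2 * (w ^ 2 - w + 1 / 6) := by
  rcases lt_or_ge w 0 with h | h
  · rw [← cosSeries_neg, cosSeries_eq ⟨by linarith, by linarith⟩]
    gcongr ?_ * ?_
    nlinarith
  rcases le_or_gt w 1 with h' | h'
  · exact (cosSeries_eq ⟨h, h'⟩).le
  · have := cosSeries_add_int (w - 1) 1
    rw [Int.cast_one, sub_add_cancel] at this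
    rw [this, cosSeries_eq ⟨by linarith, by linarith⟩]
    gcongr ?_ * ?_
    nlinarith

lemma cosSeries_add_sub_le {t h : ℝ} (ht : t ∈ Set.Icc (0 : ℝ) 1) (h1 : -1 ≤ h) (h2 : h ≤ 1) :
    cosSeries (t + h) - cosSeries t ≤ Real.pi ^ 2 * (h * (2 * t - 1) + h ^ 2) := by
  rw [cosSeries_eq ht]
  have := cosSeries_le (w := t + h) (by linarith [ht.1]) (by linarith [ht.2])
  linarith

lemma vrho_mem (u : ℝ) : vrho u ∈ Set.Icc (0 : ℝ) 1 :=
  ⟨by simpa [vrho] using Int.le_ceil u, by have := Int.ceil_lt_add_one u; simp only [vrho]; linarith⟩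

/-! ### Convergence of the averages -/

lemma mul_cos_eq_re (m : ℕ) (q h : ℝ) :
    q * Real.cos (2 * Real.pi * m * (vrho (-Real.logb 2 q) + h)) =
      (phase m q * Complex.exp (((-(2 * Real.pi * m * h) : ℝ) : ℂ) * Complex.I)).re := by
  have h1 : vrho (-Real.logb 2 q) + h = (Real.logb 2 q + h) + (⌈-Real.logb 2 q⌉ : ℤ) := by
    simp only [vrho]; ring
  have h2 : phase m q * Complex.exp (((-(2 * Real.pi * m * h) : ℝ) : ℂ) * Complex.I)
      = (q : ℂ) * Complex.exp (((-(2 * Real.pi * m * (Real.logb 2 q + h)) : ℝ) : ℂ) * Complex.I) := by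
    rw [phase, mul_assoc, ← Complex.exp_add]
    push_cast
    ring_nf
  rw [h1, cos_add_int, h2, Complex.re_ofReal_mul, Complex.exp_ofReal_mul_I_re, Real.cos_neg]

lemma tendsto_sum_cosSeries {r : ℕ} {p : Fin (r + 2) → Fin (r + 2) → ℝ} {pinit : Fin (r + 2) → ℝ}
    (hpnn : ∀ j k, 0 ≤ p j k) (hpsum : ∀ k, ∑ j, p j k = 1)
    (hinit0 : ∀ j, 0 ≤ pinit j) (hinit1 : ∑ j, pinit j = 1)
    (hspec : ∀ m : ℕ, 0 < m → specRad (Amat p (m : ℤ)) < 1) (h : ℝ) :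
    Tendsto (fun n : ℕ => ∑ x : Fin (n + 1) → Fin (r + 2), markovProb pinit p x *
      cosSeries (vrho (-Real.logb 2 (markovProb pinit p x)) + h)) atTop (𝓝 0) := by
  have hsum2 : Summable fun m : ℕ => 1 / (m : ℝ) ^ 2 :=
    Real.summable_one_div_nat_pow.2 one_lt_two
  have hs : ∀ v : ℝ, Summable fun m : ℕ => 1 / (m : ℝ) ^ 2 * Real.cos (2 * Real.pi * m * v) := by
    intro v
    refine hsum2.of_norm_bounded fun m => ?_
    rw [norm_mul, Real.norm_of_nonneg (by positivity)]
    exact mul_le_of_le_one_right (by positivity) (Real.abs_cos_le_one _)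
  -- the `m`-th cosine moment, shifted by `h`
  set E : ℕ → ℕ → ℝ := fun n m => ∑ x : Fin (n + 1) → Fin (r + 2), markovProb pinit p x *
    Real.cos (2 * Real.pi * m * (vrho (-Real.logb 2 (markovProb pinit p x)) + h)) with hE
  have hswap : ∀ n : ℕ, ∑ x : Fin (n + 1) → Fin (r + 2), markovProb pinit p x *
      cosSeries (vrho (-Real.logb 2 (markovProb pinit p x)) + h)
      = ∑' m : ℕ, 1 / (m : ℝ) ^ 2 * E n m := by
    intro n
    simp only [cosSeries, ← tsum_mul_left]
    rw [← Summable.tsum_finsetSum (fun x _ => (hs _).mul_left _)]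
    refine tsum_congr fun m => ?_
    rw [hE, Finset.mul_sum]
    exact Finset.sum_congr rfl fun x _ => by ring
  simp only [hswap]
  rw [← tsum_zero (α := ℝ) (β := ℕ)]
  refine tendsto_tsum_of_dominated_convergence hsum2 (fun m => ?_) (Eventually.of_forall fun n m => ?_)
  · rcases Nat.eq_zero_or_pos m with rfl | hm
    · simp
    have hE' : ∀ n, E n m = ((∑ x : Fin (n + 1) → Fin (r + 2), phase m (markovProb pinit p x)) *
        Complex.exp (((-(2 * Real.pi * m * h) : ℝ) : ℂ) * Complex.I)).re := by
      intro n
      rw [Finset.sum_mul, Complex.re_sum]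
      exact Finset.sum_congr rfl fun x _ => mul_cos_eq_re m _ h
    simp only [hE']
    have h1 := (tendsto_sum_phase pinit hpnn m (hspec m hm)).mul_const
      (Complex.exp (((-(2 * Real.pi * m * h) : ℝ) : ℂ) * Complex.I))
    have h2 := (Complex.continuous_re.tendsto _).comp h1
    rw [zero_mul, Complex.zero_re] at h2
    simpa only [mul_zero, Function.comp_apply] using h2.const_mul (1 / (m : ℝ) ^ 2)
  · rw [norm_mul, Real.norm_of_nonneg (by positivity)]
    refine mul_le_of_le_one_right (by positivity) ?_
    rw [← sum_markovProb hpsum hinit1 n]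
    refine norm_sum_le_of_le _ fun x _ => ?_
    have hx := markovProb_nonneg hpnn hinit0 x
    rw [norm_mul, Real.norm_of_nonneg hx]
    exact mul_le_of_le_one_right hx (Real.abs_cos_le_one _)

theorem shannon_redundancy_convergent_mode_irreducible_aperiodic (r : ℕ)
    (p : Fin (r + 2) → Fin (r + 2) → ℝ) (pinit : Fin (r + 2) → ℝ)
    (hpnn : ∀ j k, 0 ≤ p j k) (hpsum : ∀ k, ∑ j, p j k = 1)
    (hinit0 : ∀ j, 0 ≤ pinit j) (hinit1 : ∑ j, pinit j = 1)
    (hirred : ∀ j k : Fin (r + 2), ∃ l : ℕ, 0 < l ∧ 0 < (Pmat p ^ l) j k)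
    (haper : ∀ j : Fin (r + 2), ∀ d : ℕ,
      (∀ n : ℕ, 0 < n → 0 < (Pmat p ^ n) j j → d ∣ n) → d ∣ 1)
    (hspec : ∀ m : ℕ, 0 < m → specRad (Amat p (m : ℤ)) < 1) :
    Filter.Tendsto (fun n : ℕ => shannonRed (r + 2) n pinit p)
      Filter.atTop (nhds (1 / 2)) := by
  set G : ℝ → ℕ → ℝ := fun h n => ∑ x : Fin (n + 1) → Fin (r + 2), markovProb pinit p x *
      cosSeries (vrho (-Real.logb 2 (markovProb pinit p x)) + h) with hG
  have hlim : ∀ h, Tendsto (G h) atTop (𝓝 0) :=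
    tendsto_sum_cosSeries hpnn hpsum hinit0 hinit1 hspec
  -- the expectation of `cosSeries_add_sub_le`
  have hineq : ∀ h : ℝ, -1 ≤ h → h ≤ 1 → ∀ n, G h n - G 0 n ≤
      Real.pi ^ 2 * (h * (2 * shannonRed (r + 2) n pinit p - 1) + h ^ 2) := by
    intro h h1 h2 n
    have hR : Real.pi ^ 2 * (h * (2 * shannonRed (r + 2) n pinit p - 1) + h ^ 2) =
        ∑ x : Fin (n + 1) → Fin (r + 2), markovProb pinit p x * (Real.pi ^ 2 *
          (h * (2 * vrho (-Real.logb 2 (markovProb pinit p x)) - 1) + h ^ 2)) := by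
      have : ∀ x : Fin (n + 1) → Fin (r + 2), markovProb pinit p x * (Real.pi ^ 2 *
          (h * (2 * vrho (-Real.logb 2 (markovProb pinit p x)) - 1) + h ^ 2)) =
          (Real.pi ^ 2 * h * 2) *
            (markovProb pinit p x * vrho (-Real.logb 2 (markovProb pinit p x)))
          + (Real.pi ^ 2 * (h ^ 2 - h)) * markovProb pinit p x := fun x => by ring
      simp only [this]
      rw [Finset.sum_add_distrib, ← Finset.mul_sum, ← Finset.mul_sum,
        sum_markovProb hpsum hinit1, shannonRed]
      ring
    rw [hR, hG]
    simp only
    rw [← Finset.sum_sub_distrib]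
    refine Finset.sum_le_sum fun x _ => ?_
    rw [← mul_sub, add_zero]
    exact mul_le_mul_of_nonneg_left (cosSeries_add_sub_le (vrho_mem _) h1 h2)
      (markovProb_nonneg hpnn hinit0 x)
  rw [Metric.tendsto_atTop']
  intro ε hε
  set h : ℝ := min ε 1 / 2 with hh
  have hmin : 0 < min ε 1 := lt_min hε one_pos
  have h0 : 0 < h := by positivity
  have h1 : h ≤ 1 := by linarith [min_le_right ε 1]
  have hhε : h < ε := by linarith [min_le_left ε 1]
  have hpi : 0 < Real.pi ^ 2 := by positivity
  have hδ : 0 < Real.pi ^ 2 * h ^ 2 := by positivity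
  have hp := ((hlim h).sub (hlim 0)).eventually_const_lt (u := -(Real.pi ^ 2 * h ^ 2)) (by linarith)
  have hm := ((hlim (-h)).sub (hlim 0)).eventually_const_lt (u := -(Real.pi ^ 2 * h ^ 2))
    (by linarith)
  obtain ⟨N, hN⟩ := (hp.and hm).exists_forall_of_atTop
  refine ⟨N, fun n hn => ?_⟩
  obtain ⟨ha, hb⟩ := hN n hn.le
  have i1 := ha.trans_le (hineq h (by linarith) h1 n)
  have i2 := hb.trans_le (hineq (-h) (by linarith) (by linarith) n)
  set R := shannonRed (r + 2) n pinit p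
  have j1 : 0 < h * (2 * R - 1 + 2 * h) := by
    refine pos_of_mul_pos_right (a := Real.pi ^ 2) ?_ hpi.le
    linarith
  have j2 : 0 < h * (-(2 * R - 1) + 2 * h) := by
    refine pos_of_mul_pos_right (a := Real.pi ^ 2) ?_ hpi.le
    linarith
  have k1 := pos_of_mul_pos_right j1 h0.le
  have k2 := pos_of_mul_pos_right j2 h0.le
  rw [Real.dist_eq, abs_lt]
  constructor <;> linarith
end

section
/- Let 0 < α < 1 and consider the two-state Markov source with transition probabilities p(1|1) = 1−α, p(2|1) = α, p(1|2) = 0, p(2|2) = 1, and initial probabilities p₁ = 1, p₂ = 0 (so this chain is reducible). Then the average redundancy of the Shannon code converges: lim_{n→∞} R_n = Σ_{k=0}^∞ α·(1−α)^k·ϱ(−log α − k·log(1−α)). In particular, R_n always tends to a constant that depends on α. -/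
open scoped Classical in
/-- Average redundancy of the Shannon code of block length `n+1`, summing only
over strings of positive probability. -/
noncomputable def shannonRedPos (r n : ℕ) (pinit : Fin r → ℝ)
    (p : Fin r → Fin r → ℝ) : ℝ :=
  ∑ x ∈ Finset.univ.filter
      (fun x : Fin (n + 1) → Fin r => 0 < markovProb pinit p x),
    markovProb pinit p x * vrho (-Real.logb 2 (markovProb pinit p x))

/-- The contribution of a string of probability `u` to the redundancy; it is `0` for `u ≤ 0`, so
that strings of probability zero may be included in the sum. -/
noncomputable def redTerm (u : ℝ) : ℝ := if 0 < u then u * vrho (-Real.logb 2 u) else 0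

lemma vrho_nonneg (u : ℝ) : 0 ≤ vrho u := sub_nonneg.2 (Int.le_ceil u)

lemma vrho_le_one (u : ℝ) : vrho u ≤ 1 := by
  have := Int.ceil_lt_add_one u
  unfold vrho
  linarith

lemma redTerm_of_pos {u : ℝ} (hu : 0 < u) : redTerm u = u * vrho (-Real.logb 2 u) := if_pos hu

lemma redTerm_nonneg (u : ℝ) : 0 ≤ redTerm u := by
  unfold redTerm
  split_ifs with h
  · exact mul_nonneg h.le (vrho_nonneg _)
  · exact le_rfl

lemma redTerm_le {u : ℝ} (hu : 0 < u) : redTerm u ≤ u := by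
  rw [redTerm_of_pos hu]
  exact mul_le_of_le_one_right hu.le (vrho_le_one _)

lemma shannonRedPos_eq_sum (r n : ℕ) (pinit : Fin r → ℝ) (p : Fin r → Fin r → ℝ) :
    shannonRedPos r n pinit p =
      ∑ x : Fin (n + 1) → Fin r, redTerm (markovProb pinit p x) := by
  unfold shannonRedPos redTerm
  rw [Finset.sum_filter]

lemma markovProb_cons {r n : ℕ} (pinit : Fin r → ℝ) (p : Fin r → Fin r → ℝ) (i : Fin r)
    (y : Fin (n + 1) → Fin r) :
    markovProb pinit p (Fin.cons i y : Fin (n + 1 + 1) → Fin r) =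
      markovProb (fun j => pinit i * p j i) p y := by
  unfold markovProb
  rw [Fin.prod_univ_succ]
  simp only [Fin.cons_zero, Fin.cons_succ, Fin.castSucc_zero, ← Fin.succ_castSucc]
  ring

lemma sum_markovProb_succ (f : ℝ → ℝ) {r n : ℕ} (pinit : Fin r → ℝ) (p : Fin r → Fin r → ℝ) :
    ∑ x : Fin (n + 1 + 1) → Fin r, f (markovProb pinit p x) =
      ∑ i, ∑ y : Fin (n + 1) → Fin r, f (markovProb (fun j => pinit i * p j i) p y) := by
  rw [← (Fin.consEquiv (fun _ : Fin (n + 1 + 1) => Fin r)).sum_comp, Fintype.sum_prod_type]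
  exact Finset.sum_congr rfl fun i _ => Finset.sum_congr rfl fun y _ => by
    rw [← markovProb_cons]; rfl

/-- Sum of `f` over the string probabilities of the absorbing chain: the weight `b` stays in the
absorbing state, while the weight `a` is absorbed after `k < n` steps or not at all. -/
lemma sum_markovProb_s15 (f : ℝ → ℝ) (hf : f 0 = 0) (α : ℝ) (n : ℕ) (a b : ℝ) :
    ∑ x : Fin (n + 1) → Fin 2,
        f (markovProb ![a, b] (fun j k => ![![1 - α, 0], ![α, 1]] j k) x) =
      f b + f (a * (1 - α) ^ n) + ∑ k ∈ Finset.range n, f (a * (α * (1 - α) ^ k)) := by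
  induction n generalizing a b with
  | zero =>
    rw [← (Equiv.funUnique (Fin 1) (Fin 2)).symm.sum_comp]
    simp [markovProb, Fin.sum_univ_two, add_comm]
  | succ n ih =>
    have h0 : (fun j : Fin 2 => (![a, b] : Fin 2 → ℝ) 0 *
        (![![1 - α, 0], ![α, 1]] : Fin 2 → Fin 2 → ℝ) j 0) = ![a * (1 - α), a * α] := by
      ext j; fin_cases j <;> simp
    have h1 : (fun j : Fin 2 => (![a, b] : Fin 2 → ℝ) 1 *
        (![![1 - α, 0], ![α, 1]] : Fin 2 → Fin 2 → ℝ) j 1) = ![0, b] := by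
      ext j; fin_cases j <;> simp
    rw [sum_markovProb_succ, Fin.sum_univ_two, h0, h1, ih, ih, Finset.sum_range_succ']
    simp only [zero_mul, hf, Finset.sum_const_zero, pow_succ, pow_zero, mul_one, add_zero]
    have e : ∀ k : ℕ, a * (α * ((1 - α) ^ k * (1 - α))) = a * (1 - α) * (α * (1 - α) ^ k) :=
      fun k => by ring
    have e' : a * ((1 - α) ^ n * (1 - α)) = a * (1 - α) * (1 - α) ^ n := by ring
    simp only [e, e']
    ring

theorem reducible_two_state_redundancy_limit (α : ℝ) (hα0 : 0 < α) (hα1 : α < 1) :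
    Filter.Tendsto
      (fun n : ℕ => shannonRedPos 2 n ![1, 0] (fun j k => ![![1 - α, 0], ![α, 1]] j k))
      Filter.atTop
      (nhds (∑' k : ℕ, α * (1 - α) ^ k *
        vrho (-Real.logb 2 α - (k : ℝ) * Real.logb 2 (1 - α)))) := by
  have hβ : 0 < 1 - α := sub_pos.2 hα1
  have hβ1 : 1 - α < 1 := by linarith
  have hpos (k : ℕ) : 0 < α * (1 - α) ^ k := mul_pos hα0 (pow_pos hβ k)
  have hterm (k : ℕ) : α * (1 - α) ^ k *
      vrho (-Real.logb 2 α - (k : ℝ) * Real.logb 2 (1 - α)) = redTerm (α * (1 - α) ^ k) := by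
    rw [redTerm_of_pos (hpos k), Real.logb_mul hα0.ne' (pow_pos hβ k).ne', Real.logb_pow]
    ring_nf
  have hred0 : redTerm 0 = 0 := if_neg (lt_irrefl 0)
  simp only [hterm, shannonRedPos_eq_sum, sum_markovProb_s15 redTerm hred0, hred0, one_mul, zero_add]
  have hsum : Summable fun k : ℕ => redTerm (α * (1 - α) ^ k) :=
    Summable.of_nonneg_of_le (fun k => redTerm_nonneg _) (fun k => redTerm_le (hpos k))
      ((summable_geometric_of_lt_one hβ.le hβ1).mul_left α)
  have hlast : Filter.Tendsto (fun n : ℕ => redTerm ((1 - α) ^ n)) Filter.atTop (nhds 0) :=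
    squeeze_zero (fun n => redTerm_nonneg _) (fun n => redTerm_le (pow_pos hβ n))
      (tendsto_pow_atTop_nhds_zero_of_lt_one hβ.le hβ1)
  simpa only [zero_add] using hlast.add hsum.hasSum.tendsto_sum_nat
end
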